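/- (Adaptive strong composition, as used in Eq. (13) of the paper.) Let Z be a measurable space, N ≥ 1, T ≥ 1, ε₀ ≥ 0, and δ̂ ∈ (0,1). Let X₁,…,X_T be measurable spaces and, for each t = 1,…,T, let κ_t be a Markov kernel from Z^N × (X₁ × ⋯ × X_{t−1}) to X_t such that for every fixed history (o₁,…,o_{t−1}), the kernel S ↦ κ_t(S, o₁,…,o_{t−1}) is (ε₀, 0)-differentially private. Then the adaptively composed kernel from Z^N to X₁ × ⋯ × X_T, sending S to the joint law of (O₁,…,O_T) where O_t ∼ κ_t(S, O₁,…,O_{t−1}), is (ε, δ̂)-differentially private with ε = ε₀·√(2·T·log(1/δ̂)) + T·ε₀·(e^{ε₀} − 1). -/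

import Mathlib

open MeasureTheory

/-- Two datasets `S, S' ∈ Z^N` are neighboring if they differ in at most one
coordinate. -/
def Neighboring {Z : Type*} {N : ℕ} (S S' : Fin N → Z) : Prop :=
  ∃ i : Fin N, ∀ j : Fin N, j ≠ i → S j = S' j

/-- A randomized algorithm is `(ε,δ)`-differentially private if for all
neighboring datasets `S, S'` and every measurable set `E` of outputs,
`P(A(S) ∈ E) ≤ e^ε · P(A(S') ∈ E) + δ`. -/
def IsDP {Z : Type*} [MeasurableSpace Z] {N : ℕ} {Ω : Type*} [MeasurableSpace Ω]
    (A : (Fin N → Z) → Measure Ω) (ε δ : ℝ) : Prop :=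
  ∀ S S' : Fin N → Z, Neighboring S S' → ∀ E : Set Ω, MeasurableSet E →
    A S E ≤ ENNReal.ofReal (Real.exp ε) * A S' E + ENNReal.ofReal δ

/-- Adaptive composition of the kernels `κ_t` on a dataset `S`: the joint law of
`(O₁,…,O_T)` where `O_t ∼ κ_t(S, O₁,…,O_{t−1})`, built by recursion on `T` via
`bind` and `Fin.snoc`. -/
noncomputable def composedMeasure {Z : Type*} [MeasurableSpace Z] {N : ℕ}
    (X : ℕ → Type*) [∀ t, MeasurableSpace (X t)]
    (κ : ∀ t : ℕ, (Fin N → Z) → (∀ s : Fin t, X s) → Measure (X t))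
    (S : Fin N → Z) : ∀ T : ℕ, Measure (∀ t : Fin T, X t)
  | 0 => Measure.dirac (fun s => s.elim0)
  | (T + 1) =>
      (composedMeasure X κ S T).bind
        (fun h => (κ T S h).map
          (fun x => @Fin.snoc T (fun i : Fin (T + 1) => X i) h x))

/-
For neighboring datasets, the output laws `P`, `Q` are compared through the moments
`∫ (dP/dQ)^(1+c) dQ`, `c ≥ 0`. Under composition the density is a product of conditional
densities, so uniform bounds on these moments multiply. In a single `ε`-private round the privacy
loss `l = log (dP/dQ)` lies in `[-ε, ε]`, and its `P`-mean is at most `ε (e^ε - 1)`; by Hoeffding's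
lemma under `P`, i.e. under `Q` tilted by `l`, the moment is at most
`exp (c ε (e^ε - 1) + c² ε² / 2)`. After `T` rounds the exponents add up, and a Chernoff bound for
the event that the privacy loss exceeds its mean by `√(2 T ε² log (1/δ))` gives the privacy
guarantee.
-/

open ProbabilityTheory Filter
open scoped ENNReal Topology

section RenyiMoment

variable {Ω : Type*} [MeasurableSpace Ω]

/-- The Rényi moment `∫ (dP/dQ)^α dQ`. For `P ≪ Q` and `α > 1` it is the exponential of
`(α - 1) * D_α(P‖Q)`, where `D_α` is the Rényi divergence; unlike the divergence, it is
multiplicative under composition. -/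
noncomputable def renyiMoment (α : ℝ) (P Q : Measure Ω) : ℝ≥0∞ :=
  ∫⁻ ω, P.rnDeriv Q ω ^ α ∂Q

lemma renyiMoment_self (α : ℝ) (P : Measure Ω) [SigmaFinite P] :
    renyiMoment α P P = P Set.univ := by
  rw [renyiMoment, lintegral_congr_ae (g := fun _ ↦ 1), lintegral_one]
  filter_upwards [P.rnDeriv_self] with ω hω
  rw [hω, ENNReal.one_rpow]

lemma renyiMoment_map {Ω' : Type*} [MeasurableSpace Ω'] (α : ℝ) (P Q : Measure Ω) [SigmaFinite P]
    [SigmaFinite Q] {f : Ω → Ω'} (hf : MeasurableEmbedding f) :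
    renyiMoment α (P.map f) (Q.map f) = renyiMoment α P Q := by
  rw [renyiMoment, hf.lintegral_map]
  refine lintegral_congr_ae ?_
  filter_upwards [hf.rnDeriv_map P Q] with ω hω
  rw [hω]

lemma renyiMoment_compProd_le {Y : Type*} [MeasurableSpace Y] {P Q : Measure Ω} [IsFiniteMeasure P]
    [IsFiniteMeasure Q] {p q : Kernel Ω Y} [IsFiniteKernel p] [IsFiniteKernel q] {α : ℝ}
    (hα : 0 < α) (hpq : P ⊗ₘ p ≪ P ⊗ₘ q) {B : ℝ≥0∞}
    (hB : ∀ᵐ ω ∂P, ∫⁻ y, (P ⊗ₘ p).rnDeriv (P ⊗ₘ q) (ω, y) ^ α ∂q ω ≤ B) :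
    renyiMoment α (P ⊗ₘ p) (Q ⊗ₘ q) ≤ renyiMoment α P Q * B := by
  calc renyiMoment α (P ⊗ₘ p) (Q ⊗ₘ q)
      = ∫⁻ z, P.rnDeriv Q z.1 ^ α * (P ⊗ₘ p).rnDeriv (P ⊗ₘ q) z ^ α ∂(Q ⊗ₘ q) := by
        refine lintegral_congr_ae ?_
        filter_upwards [rnDeriv_compProd hpq Q] with z hz
        rw [hz, ENNReal.mul_rpow_of_nonneg _ _ hα.le]
    _ = ∫⁻ ω, P.rnDeriv Q ω ^ α * ∫⁻ y, (P ⊗ₘ p).rnDeriv (P ⊗ₘ q) (ω, y) ^ α ∂q ω ∂Q := by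
        rw [Measure.lintegral_compProd (by fun_prop)]
        refine lintegral_congr fun ω ↦ ?_
        dsimp only
        rw [lintegral_const_mul _ (by fun_prop)]
    _ ≤ ∫⁻ ω, P.rnDeriv Q ω ^ α * B ∂Q := by
        refine lintegral_mono_ae ?_
        filter_upwards [Measure.ae_rnDeriv_ne_zero_imp_of_ae Q hB] with ω hω
        by_cases h0 : P.rnDeriv Q ω = 0
        · simp only [h0, ENNReal.zero_rpow_of_pos hα, zero_mul, le_refl]
        · gcongr
          exact hω h0
    _ = renyiMoment α P Q * B := lintegral_mul_const _ (by fun_prop)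

lemma le_add_rpow_neg_mul_rpow_one_add {K : ℝ≥0∞} (hK₀ : K ≠ 0) (hK : K ≠ ∞) {c : ℝ} (hc : 0 ≤ c)
    (x : ℝ≥0∞) : x ≤ K + K ^ (-c) * x ^ (1 + c) := by
  rcases le_total x K with hxK | hKx
  · exact hxK.trans le_self_add
  · calc x = x * (K ^ (-c) * K ^ c) := by
          rw [← ENNReal.rpow_add _ _ hK₀ hK, neg_add_cancel, ENNReal.rpow_zero, mul_one]
      _ ≤ x * (K ^ (-c) * x ^ c) := by gcongr
      _ = K ^ (-c) * x ^ (1 + c) := by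
          rw [ENNReal.rpow_add_of_nonneg _ _ zero_le_one hc, ENNReal.rpow_one]
          ring
      _ ≤ K + K ^ (-c) * x ^ (1 + c) := le_add_self

lemma measure_le_mul_add_renyiMoment {P Q : Measure Ω} [SigmaFinite P] [SigmaFinite Q]
    (hPQ : P ≪ Q) {K : ℝ≥0∞} (hK₀ : K ≠ 0) (hK : K ≠ ∞) {c : ℝ} (hc : 0 ≤ c) (E : Set Ω) :
    P E ≤ K * Q E + K ^ (-c) * renyiMoment (1 + c) P Q := by
  calc P E = ∫⁻ ω in E, P.rnDeriv Q ω ∂Q := (Measure.setLIntegral_rnDeriv hPQ E).symm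
    _ ≤ ∫⁻ ω in E, (K + K ^ (-c) * P.rnDeriv Q ω ^ (1 + c)) ∂Q :=
        lintegral_mono fun ω ↦ le_add_rpow_neg_mul_rpow_one_add hK₀ hK hc _
    _ = K * Q E + K ^ (-c) * ∫⁻ ω in E, P.rnDeriv Q ω ^ (1 + c) ∂Q := by
        rw [lintegral_add_left measurable_const, setLIntegral_const,
          lintegral_const_mul _ (by fun_prop)]
    _ ≤ K * Q E + K ^ (-c) * renyiMoment (1 + c) P Q := by
        gcongr
        exact setLIntegral_le_lintegral _ _

end RenyiMoment

section BoundedDensity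

variable {Ω : Type*} [MeasurableSpace Ω] {P Q : Measure Ω}

lemma rnDeriv_le_of_le_smul [SigmaFinite Q] {K : ℝ≥0∞} (h : P ≤ K • Q) :
    ∀ᵐ ω ∂Q, P.rnDeriv Q ω ≤ K := by
  refine ae_le_of_forall_setLIntegral_le_of_sigmaFinite (P.measurable_rnDeriv Q) fun s _ _ ↦ ?_
  rw [setLIntegral_const]
  exact (Measure.setLIntegral_rnDeriv_le s).trans (h s)

lemma inv_le_rnDeriv_of_le_smul [SigmaFinite P] [SigmaFinite Q] {K : ℝ≥0∞} (h : Q ≤ K • P) :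
    ∀ᵐ ω ∂Q, K⁻¹ ≤ P.rnDeriv Q ω := by
  have hQP : Q ≪ P := Measure.absolutelyContinuous_of_le_smul h
  filter_upwards [hQP.ae_le (rnDeriv_le_of_le_smul h), Measure.inv_rnDeriv hQP] with ω hle hinv
  rw [← hinv]
  exact ENNReal.inv_le_inv.2 hle

lemma compProd_le_smul_compProd {Y : Type*} [MeasurableSpace Y] [SFinite P] {p q : Kernel Ω Y}
    [IsSFiniteKernel p] [IsSFiniteKernel q] {K : ℝ≥0∞} (h : ∀ ω, p ω ≤ K • q ω) :
    P ⊗ₘ p ≤ K • (P ⊗ₘ q) := by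
  refine Measure.le_iff.2 fun E hE ↦ ?_
  rw [Measure.smul_apply, Measure.compProd_apply hE, Measure.compProd_apply hE, smul_eq_mul,
    ← lintegral_const_mul _ (Kernel.measurable_kernel_prodMk_left hE)]
  exact lintegral_mono fun ω ↦ h ω _

end BoundedDensity

section PrivacyLoss

variable {Ω : Type*} [MeasurableSpace Ω] {ε : ℝ}

lemma exp_sub_one_mul_le {x : ℝ} (hx : |x| ≤ ε) :
    (Real.exp x - 1) * x ≤ ε * (Real.exp ε - 1) := by
  have abs_exp_sub_one : |Real.exp x - 1| ≤ Real.exp |x| - 1 := by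
    rcases le_total 0 x with h0 | h0
    · rw [abs_of_nonneg h0, abs_of_nonneg (sub_nonneg.2 (Real.one_le_exp h0))]
    · have hcosh : 1 ≤ Real.cosh x := Real.one_le_cosh x
      rw [Real.cosh_eq] at hcosh
      rw [abs_of_nonpos h0, abs_of_nonpos (sub_nonpos.2 (Real.exp_le_one_iff.2 h0))]
      linarith
  calc (Real.exp x - 1) * x ≤ |Real.exp x - 1| * |x| := by
        rw [← abs_mul]
        exact le_abs_self _
    _ ≤ (Real.exp ε - 1) * ε := by
        have : Real.exp |x| ≤ Real.exp ε := Real.exp_le_exp.2 hx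
        gcongr
        · exact (abs_nonneg _).trans (abs_exp_sub_one.trans (by linarith))
        · linarith
    _ = ε * (Real.exp ε - 1) := mul_comm _ _

lemma integral_exp_mul_self_le {Q : Measure Ω} [IsProbabilityMeasure Q] {l : Ω → ℝ}
    (hl : AEMeasurable l Q) (hb : ∀ᵐ ω ∂Q, l ω ∈ Set.Icc (-ε) ε)
    (h1 : ∫ ω, Real.exp (l ω) ∂Q = 1) :
    ∫ ω, Real.exp (l ω) * l ω ∂Q ≤ ε * (Real.exp ε - 1) := by
  have hexp : Integrable (fun ω ↦ Real.exp (l ω)) Q := by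
    simpa only [one_mul] using integrable_exp_mul_of_mem_Icc (t := 1) hl hb
  have hmul : Integrable (fun ω ↦ Real.exp (l ω) * l ω) Q := by
    refine hexp.mul_bdd (c := ε) hl.aestronglyMeasurable ?_
    filter_upwards [hb] with ω hω using abs_le.2 hω
  -- `l ≤ e^l - 1` has nonpositive `Q`-mean, so `(e^l - 1) * l` bounds `e^l * l` in the mean.
  calc ∫ ω, Real.exp (l ω) * l ω ∂Q
      ≤ ∫ ω, (ε * (Real.exp ε - 1) + (Real.exp (l ω) - 1)) ∂Q := by
        refine integral_mono_ae hmul (by fun_prop) ?_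
        filter_upwards [hb] with ω hω
        linarith [exp_sub_one_mul_le (abs_le.2 hω), Real.add_one_le_exp (l ω)]
    _ = ε * (Real.exp ε - 1) := by
        rw [integral_add (by fun_prop) (by fun_prop), integral_sub hexp (by fun_prop), h1]
        simp

lemma mgf_le_of_mem_Icc {P : Measure Ω} [IsProbabilityMeasure P] {X : Ω → ℝ} {a b : ℝ}
    (hX : AEMeasurable X P) (hb : ∀ᵐ ω ∂P, X ω ∈ Set.Icc a b) (t : ℝ) :
    mgf X P t ≤ Real.exp (t * P[X] + t ^ 2 * ((b - a) / 2) ^ 2 / 2) := by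
  have hoeffding := (hasSubgaussianMGF_of_mem_Icc hX hb).mgf_le t
  calc mgf X P t = mgf (fun ω ↦ (X ω - P[X]) + P[X]) P t := by simp only [sub_add_cancel]
    _ = mgf (fun ω ↦ X ω - P[X]) P t * Real.exp (t * P[X]) := mgf_add_const _
    _ ≤ Real.exp ((‖b - a‖₊ / 2) ^ 2 * t ^ 2 / 2) * Real.exp (t * P[X]) := by
        gcongr
        exact_mod_cast hoeffding
    _ = Real.exp (t * P[X] + t ^ 2 * ((b - a) / 2) ^ 2 / 2) := by
        rw [← Real.exp_add, coe_nnnorm, div_pow, Real.norm_eq_abs, sq_abs]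
        ring_nf

lemma mgf_one_add_le {Q : Measure Ω} [IsProbabilityMeasure Q] {l : Ω → ℝ}
    (hl : AEMeasurable l Q) (hb : ∀ᵐ ω ∂Q, l ω ∈ Set.Icc (-ε) ε)
    (h1 : ∫ ω, Real.exp (l ω) ∂Q = 1) {c : ℝ} (hc : 0 ≤ c) :
    mgf l Q (1 + c) ≤ Real.exp (c * (ε * (Real.exp ε - 1)) + c ^ 2 * ε ^ 2 / 2) := by
  have hexp : Integrable (fun ω ↦ Real.exp (l ω)) Q := by
    simpa only [one_mul] using integrable_exp_mul_of_mem_Icc (t := 1) hl hb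
  have := isProbabilityMeasure_tilted hexp
  have hac := tilted_absolutelyContinuous Q l
  calc mgf l Q (1 + c) = mgf l (Q.tilted l) c := by
        simp only [mgf, integral_tilted, h1, div_one, smul_eq_mul, ← Real.exp_add, add_mul, one_mul]
    _ ≤ Real.exp (c * (Q.tilted l)[l] + c ^ 2 * ((ε - -ε) / 2) ^ 2 / 2) :=
        mgf_le_of_mem_Icc (hl.mono_ac hac) (hac.ae_le hb) c
    _ ≤ Real.exp (c * (ε * (Real.exp ε - 1)) + c ^ 2 * ε ^ 2 / 2) := by
        have hmean : (Q.tilted l)[l] ≤ ε * (Real.exp ε - 1) := by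
          simpa only [integral_tilted, h1, div_one, smul_eq_mul]
            using integral_exp_mul_self_le hl hb h1
        rw [sub_neg_eq_add, add_self_div_two]
        gcongr

lemma lintegral_rpow_one_add_le {Q : Measure Ω} [IsProbabilityMeasure Q] {D : Ω → ℝ≥0∞}
    (hD : AEMeasurable D Q) (hle : ∀ᵐ ω ∂Q, D ω ≤ ENNReal.ofReal (Real.exp ε))
    (hge : ∀ᵐ ω ∂Q, (ENNReal.ofReal (Real.exp ε))⁻¹ ≤ D ω) (h1 : ∫⁻ ω, D ω ∂Q = 1)
    {c : ℝ} (hc : 0 ≤ c) :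
    ∫⁻ ω, D ω ^ (1 + c) ∂Q ≤
      ENNReal.ofReal (Real.exp (c * (ε * (Real.exp ε - 1)) + c ^ 2 * ε ^ 2 / 2)) := by
  set l : Ω → ℝ := fun ω ↦ Real.log (D ω).toReal with hl_def
  have hl : AEMeasurable l Q := by fun_prop
  have hDl : ∀ᵐ ω ∂Q, D ω = ENNReal.ofReal (Real.exp (l ω)) := by
    filter_upwards [hle, hge] with ω hω hω'
    have hpos : 0 < (D ω).toReal := ENNReal.toReal_pos
      (((ENNReal.inv_pos.2 ENNReal.ofReal_ne_top).trans_le hω').ne')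
      (hω.trans_lt ENNReal.ofReal_lt_top).ne
    rw [hl_def, Real.exp_log hpos, ENNReal.ofReal_toReal (hω.trans_lt ENNReal.ofReal_lt_top).ne]
  have hb : ∀ᵐ ω ∂Q, l ω ∈ Set.Icc (-ε) ε := by
    filter_upwards [hle, hge, hDl] with ω hω hω' hDω
    rw [hDω, ENNReal.ofReal_le_ofReal_iff (Real.exp_pos _).le, Real.exp_le_exp] at hω
    rw [hDω, ← ENNReal.ofReal_inv_of_pos (Real.exp_pos _), ← Real.exp_neg,
      ENNReal.ofReal_le_ofReal_iff (Real.exp_pos _).le, Real.exp_le_exp] at hω'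
    exact ⟨hω', hω⟩
  have hexp : ∫ ω, Real.exp (l ω) ∂Q = 1 := by
    rw [integral_eq_lintegral_of_nonneg_ae (ae_of_all _ fun _ ↦ (Real.exp_pos _).le) (by fun_prop),
      ← lintegral_congr_ae hDl, h1, ENNReal.toReal_one]
  calc ∫⁻ ω, D ω ^ (1 + c) ∂Q = ∫⁻ ω, ENNReal.ofReal (Real.exp ((1 + c) * l ω)) ∂Q := by
        refine lintegral_congr_ae ?_
        filter_upwards [hDl] with ω hω
        rw [hω, ENNReal.ofReal_rpow_of_pos (Real.exp_pos _), ← Real.exp_mul, mul_comm]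
    _ = ENNReal.ofReal (mgf l Q (1 + c)) :=
        (ofReal_integral_eq_lintegral_ofReal (integrable_exp_mul_of_mem_Icc hl hb)
          (ae_of_all _ fun _ ↦ (Real.exp_pos _).le)).symm
    _ ≤ _ := ENNReal.ofReal_le_ofReal (mgf_one_add_le hl hb hexp hc)

end PrivacyLoss

section Concentrated

variable {Ω : Type*} [MeasurableSpace Ω] {P Q : Measure Ω} {a v : ℝ}

/-- `P` is `(a, v)`-concentrated with respect to `Q` if the Rényi divergences satisfy
`D_{1+c}(P‖Q) ≤ a + c * v / 2` for all `c > 0`, that is, if under `P` the privacy loss `log (dP/dQ)`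
has at most the upper exponential moments of a Gaussian of mean `a` and variance `v`. This is the
condition on neighboring datasets in concentrated differential privacy. Absolute continuity is
required because `renyiMoment` does not see the part of `P` singular to `Q`. -/
structure IsConcentrated (P Q : Measure Ω) (a v : ℝ) : Prop where
  absolutelyContinuous : P ≪ Q
  renyiMoment_le : ∀ c : ℝ, 0 ≤ c →
    renyiMoment (1 + c) P Q ≤ ENNReal.ofReal (Real.exp (c * a + c ^ 2 * v / 2))

namespace IsConcentrated

lemma refl (P : Measure Ω) [IsProbabilityMeasure P] : IsConcentrated P P 0 0 where
  absolutelyContinuous := .rfl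
  renyiMoment_le c _ := by simp [renyiMoment_self]

lemma mono (h : IsConcentrated P Q a v) {w : ℝ} (hvw : v ≤ w) : IsConcentrated P Q a w where
  absolutelyContinuous := h.absolutelyContinuous
  renyiMoment_le c hc := (h.renyiMoment_le c hc).trans (by gcongr)

lemma map {Ω' : Type*} [MeasurableSpace Ω'] [SigmaFinite P] [SigmaFinite Q]
    (h : IsConcentrated P Q a v) {f : Ω → Ω'} (hf : MeasurableEmbedding f) :
    IsConcentrated (P.map f) (Q.map f) a v where
  absolutelyContinuous := h.absolutelyContinuous.map hf.measurable
  renyiMoment_le c hc := (renyiMoment_map _ P Q hf).trans_le (h.renyiMoment_le c hc)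

lemma compProd {Y : Type*} [MeasurableSpace Y] [IsProbabilityMeasure P] [IsProbabilityMeasure Q]
    (h : IsConcentrated P Q a v) {p q : Kernel Ω Y} [IsMarkovKernel p] [IsMarkovKernel q] {ε : ℝ}
    (hpq : ∀ ω, p ω ≤ ENNReal.ofReal (Real.exp ε) • q ω)
    (hqp : ∀ ω, q ω ≤ ENNReal.ofReal (Real.exp ε) • p ω) :
    IsConcentrated (P ⊗ₘ p) (Q ⊗ₘ q) (a + ε * (Real.exp ε - 1)) (v + ε ^ 2) := by
  have hpq' := compProd_le_smul_compProd (P := P) hpq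
  have hac : P ⊗ₘ p ≪ P ⊗ₘ q := Measure.absolutelyContinuous_of_le_smul hpq'
  refine ⟨hac.trans (h.absolutelyContinuous.compProd_left q), fun c hc ↦ ?_⟩
  have hstep : ∀ᵐ ω ∂P, ∫⁻ y, (P ⊗ₘ p).rnDeriv (P ⊗ₘ q) (ω, y) ^ (1 + c) ∂q ω ≤
      ENNReal.ofReal (Real.exp (c * (ε * (Real.exp ε - 1)) + c ^ 2 * ε ^ 2 / 2)) := by
    filter_upwards [Measure.ae_ae_of_ae_compProd (rnDeriv_le_of_le_smul hpq'),
      Measure.ae_ae_of_ae_compProd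
        (inv_le_rnDeriv_of_le_smul (compProd_le_smul_compProd (P := P) hqp)),
      lintegral_rnDeriv_compProd hac] with ω hle hge h1
    exact lintegral_rpow_one_add_le (by fun_prop) hle hge (h1.trans measure_univ) hc
  calc renyiMoment (1 + c) (P ⊗ₘ p) (Q ⊗ₘ q)
      ≤ renyiMoment (1 + c) P Q *
          ENNReal.ofReal (Real.exp (c * (ε * (Real.exp ε - 1)) + c ^ 2 * ε ^ 2 / 2)) :=
        renyiMoment_compProd_le (by positivity) hac hstep
    _ ≤ ENNReal.ofReal (Real.exp (c * a + c ^ 2 * v / 2)) *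
          ENNReal.ofReal (Real.exp (c * (ε * (Real.exp ε - 1)) + c ^ 2 * ε ^ 2 / 2)) := by
        gcongr
        exact h.renyiMoment_le c hc
    _ = ENNReal.ofReal
          (Real.exp (c * (a + ε * (Real.exp ε - 1)) + c ^ 2 * (v + ε ^ 2) / 2)) := by
        rw [← ENNReal.ofReal_mul (Real.exp_pos _).le, ← Real.exp_add]
        ring_nf

lemma measure_le_of_pos [SigmaFinite P] [SigmaFinite Q] (h : IsConcentrated P Q a v) (hv : 0 < v)
    {δ : ℝ} (hδ₀ : 0 < δ) (hδ₁ : δ ≤ 1) (E : Set Ω) :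
    P E ≤ ENNReal.ofReal (Real.exp (√(2 * v * Real.log (1 / δ)) + a)) * Q E +
      ENNReal.ofReal δ := by
  set L := Real.log (1 / δ) with hL_def
  set s := √(2 * v * L)
  have hL : 0 ≤ L := Real.log_nonneg (one_le_one_div hδ₀ hδ₁)
  have hs : s ^ 2 = 2 * v * L := Real.sq_sqrt (by positivity)
  -- `c = s / v` minimizes the Chernoff exponent `-c * s + c ^ 2 * v / 2`.
  have hc : 0 ≤ s / v := by positivity
  have hexponent : (s + a) * -(s / v) + (s / v * a + (s / v) ^ 2 * v / 2) = Real.log δ := by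
    calc (s + a) * -(s / v) + (s / v * a + (s / v) ^ 2 * v / 2) = -(s ^ 2 / (2 * v)) := by
          field_simp
          ring
      _ = Real.log δ := by
          rw [hs, mul_div_right_comm, div_self (by positivity), one_mul, hL_def, one_div,
            Real.log_inv, neg_neg]
  refine (measure_le_mul_add_renyiMoment h.absolutelyContinuous
    (ENNReal.ofReal_pos.2 (Real.exp_pos (s + a))).ne' ENNReal.ofReal_ne_top hc E).trans ?_
  gcongr
  calc ENNReal.ofReal (Real.exp (s + a)) ^ (-(s / v)) * renyiMoment (1 + s / v) P Q
      ≤ ENNReal.ofReal (Real.exp ((s + a) * -(s / v))) *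
          ENNReal.ofReal (Real.exp (s / v * a + (s / v) ^ 2 * v / 2)) := by
        rw [ENNReal.ofReal_rpow_of_pos (Real.exp_pos _), ← Real.exp_mul]
        gcongr
        exact h.renyiMoment_le _ hc
    _ = ENNReal.ofReal δ := by
        rw [← ENNReal.ofReal_mul (Real.exp_pos _).le, ← Real.exp_add, hexponent, Real.exp_log hδ₀]

-- For `v = 0` the optimal Chernoff parameter is infinite, so that case is a limit `w ↓ v`.
lemma measure_le [SigmaFinite P] [SigmaFinite Q] (h : IsConcentrated P Q a v) (hv : 0 ≤ v)
    {δ : ℝ} (hδ₀ : 0 < δ) (hδ₁ : δ ≤ 1) (E : Set Ω) :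
    P E ≤ ENNReal.ofReal (Real.exp (√(2 * v * Real.log (1 / δ)) + a)) * Q E +
      ENNReal.ofReal δ := by
  set g : ℝ → ℝ := fun w ↦ Real.exp (√(2 * w * Real.log (1 / δ)) + a)
  have hg : Tendsto (fun w ↦ ENNReal.ofReal (g w)) (𝓝[>] v) (𝓝 (ENNReal.ofReal (g v))) :=
    ENNReal.tendsto_ofReal
      ((show Continuous g by fun_prop).tendsto v |>.mono_left nhdsWithin_le_nhds)
  have hlim : Tendsto (fun w ↦ ENNReal.ofReal (g w) * Q E + ENNReal.ofReal δ) (𝓝[>] v)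
      (𝓝 (ENNReal.ofReal (g v) * Q E + ENNReal.ofReal δ)) :=
    (ENNReal.Tendsto.mul_const hg (.inl (ENNReal.ofReal_pos.2 (Real.exp_pos _)).ne')).add
      tendsto_const_nhds
  refine ge_of_tendsto hlim ?_
  filter_upwards [self_mem_nhdsWithin] with w hw
  exact (h.mono hw.le).measure_le_of_pos (hv.trans_lt hw) hδ₀ hδ₁ E

end IsConcentrated

end Concentrated

section Composition

variable {Z : Type*} {N : ℕ}

lemma Neighboring.symm {S S' : Fin N → Z} (h : Neighboring S S') : Neighboring S' S :=
  h.imp fun _ hi j hj ↦ (hi j hj).symm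

variable [MeasurableSpace Z]

lemma IsDP.le_smul {Ω : Type*} [MeasurableSpace Ω] {A : (Fin N → Z) → Measure Ω} {ε : ℝ}
    (h : IsDP A ε 0) {S S' : Fin N → Z} (hS : Neighboring S S') :
    A S ≤ ENNReal.ofReal (Real.exp ε) • A S' :=
  Measure.le_iff.2 fun E hE ↦ by simpa using h S S' hS E hE

/-- `Fin.snoc` as a measurable equivalence: appending the last component to a finite history. -/
def finSnocMeasurableEquiv {n : ℕ} (α : Fin (n + 1) → Type*) [∀ i, MeasurableSpace (α i)] :
    (∀ i : Fin n, α i.castSucc) × α (Fin.last n) ≃ᵐ ∀ i, α i where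
  toEquiv := (Equiv.prodComm _ _).trans (Fin.snocEquiv α)
  measurable_toFun := measurable_pi_iff.2 fun i ↦ by
    induction i using Fin.lastCases with
    | last => simpa using measurable_snd
    | cast i => simpa [Function.comp_def] using (measurable_pi_apply i).comp measurable_fst
  measurable_invFun :=
    (measurable_pi_iff.2 fun i ↦ measurable_pi_apply i.castSucc).prodMk (measurable_pi_apply _)

lemma bind_map_prodMk {Ω Y Ω' : Type*} [MeasurableSpace Ω] [MeasurableSpace Y] [MeasurableSpace Ω']
    (P : Measure Ω) [SFinite P] (p : Kernel Ω Y) [IsSFiniteKernel p] {f : Ω × Y → Ω'}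
    (hf : Measurable f) :
    P.bind (fun ω ↦ (p ω).map fun y ↦ f (ω, y)) = (P ⊗ₘ p).map f := by
  rw [Measure.compProd_eq_comp_prod, Measure.map_comp _ _ hf]
  congr 1 with ω : 1
  rw [Kernel.map_apply _ hf, Kernel.prod_apply, Kernel.id_apply, Measure.dirac_prod,
    Measure.map_map hf measurable_prodMk_left]
  rfl

variable {X : ℕ → Type*} [∀ t, MeasurableSpace (X t)]
variable (κ : ∀ t : ℕ, (Fin N → Z) → Kernel (∀ s : Fin t, X s) (X t))
  [∀ t S, IsMarkovKernel (κ t S)]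

lemma composedMeasure_succ (S : Fin N → Z) (n : ℕ)
    [SFinite (composedMeasure X (fun t S ↦ κ t S) S n)] :
    composedMeasure X (fun t S ↦ κ t S) S (n + 1) =
      (composedMeasure X (fun t S ↦ κ t S) S n ⊗ₘ κ n S).map
        (finSnocMeasurableEquiv fun t : Fin (n + 1) ↦ X t) := by
  rw [composedMeasure]
  exact bind_map_prodMk (f := finSnocMeasurableEquiv fun t : Fin (n + 1) ↦ X t) _ (κ n S)
    (MeasurableEquiv.measurable _)

instance isProbabilityMeasure_composedMeasure (S : Fin N → Z) (n : ℕ) :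
    IsProbabilityMeasure (composedMeasure X (fun t S ↦ κ t S) S n) := by
  induction n with
  | zero => exact Measure.dirac.isProbabilityMeasure
  | succ n ih =>
    rw [composedMeasure_succ]
    exact Measure.isProbabilityMeasure_map (MeasurableEquiv.measurable _).aemeasurable

lemma isConcentrated_composedMeasure {T : ℕ} {ε : ℕ → ℝ}
    (hDP : ∀ t < T, ∀ h : ∀ s : Fin t, X s, IsDP (fun S ↦ κ t S h) (ε t) 0)
    {S S' : Fin N → Z} (hS : Neighboring S S') :
    IsConcentrated (composedMeasure X (fun t S ↦ κ t S) S T)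
      (composedMeasure X (fun t S ↦ κ t S) S' T)
      (∑ t ∈ Finset.range T, ε t * (Real.exp (ε t) - 1)) (∑ t ∈ Finset.range T, ε t ^ 2) := by
  induction T with
  | zero => exact IsConcentrated.refl _
  | succ T ih =>
    have hT := hDP T T.lt_succ_self
    rw [composedMeasure_succ, composedMeasure_succ, Finset.sum_range_succ, Finset.sum_range_succ]
    exact ((ih fun t ht ↦ hDP t (ht.trans T.lt_succ_self)).compProd
      (fun h ↦ (hT h).le_smul hS) (fun h ↦ (hT h).le_smul hS.symm)).map
      (MeasurableEquiv.measurableEmbedding _)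

theorem stmt4_general {T : ℕ} {κ : ∀ t : ℕ, (Fin N → Z) → (∀ s : Fin t, X s) → Measure (X t)}
    (hκmeas : ∀ t S, Measurable (κ t S)) (hκprob : ∀ t S h, IsProbabilityMeasure (κ t S h))
    {ε : ℕ → ℝ} (hDP : ∀ t < T, ∀ h : ∀ s : Fin t, X s, IsDP (fun S ↦ κ t S h) (ε t) 0)
    {δ : ℝ} (hδ₀ : 0 < δ) (hδ₁ : δ ≤ 1) :
    IsDP (fun S ↦ composedMeasure X κ S T)
      (√(2 * (∑ t ∈ Finset.range T, ε t ^ 2) * Real.log (1 / δ)) +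
        ∑ t ∈ Finset.range T, ε t * (Real.exp (ε t) - 1)) δ := by
  let K (t : ℕ) (S : Fin N → Z) : Kernel (∀ s : Fin t, X s) (X t) := ⟨κ t S, hκmeas t S⟩
  have (t : ℕ) (S : Fin N → Z) : IsMarkovKernel (K t S) := ⟨hκprob t S⟩
  exact fun S S' hS E _ ↦ (isConcentrated_composedMeasure K hDP hS).measure_le
    (Finset.sum_nonneg fun _ _ ↦ sq_nonneg _) hδ₀ hδ₁ E

end Composition

lemma sqrt_two_mul_sum_const_sq_mul {c : ℝ} (hc : 0 ≤ c) (T : ℕ) (L : ℝ) :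
    √(2 * (∑ _t ∈ Finset.range T, c ^ 2) * L) = c * √(2 * T * L) := by
  rw [Finset.sum_const, Finset.card_range, nsmul_eq_mul, ← mul_assoc, mul_right_comm,
    Real.sqrt_mul' _ (sq_nonneg c), Real.sqrt_sq hc, mul_comm]

/-- adaptive strong composition: if for each `t < T` and every
fixed history `(o₁,…,o_{t−1})` the kernel `S ↦ κ_t(S, o₁,…,o_{t−1})` is
`(ε₀, 0)`-differentially private, then the adaptively composed kernel
`S ↦ law of (O₁,…,O_T)`, where `O_t ∼ κ_t(S, O₁,…,O_{t−1})`, is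
`(ε, δ̂)`-differentially private with
`ε = ε₀·√(2·T·log(1/δ̂)) + T·ε₀·(e^{ε₀} − 1)`. -/
theorem stmt4 {Z : Type*} [MeasurableSpace Z] (N T : ℕ) (hN : 1 ≤ N) (hT : 1 ≤ T)
    (X : ℕ → Type*) [∀ t, MeasurableSpace (X t)]
    (κ : ∀ t : ℕ, (Fin N → Z) → (∀ s : Fin t, X s) → Measure (X t))
    (hκmeas : ∀ t : ℕ,
      Measurable (fun q : (Fin N → Z) × (∀ s : Fin t, X s) => κ t q.1 q.2))
    (hκprob : ∀ (t : ℕ) (S : Fin N → Z) (h : ∀ s : Fin t, X s),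
      IsProbabilityMeasure (κ t S h))
    (ε₀ : ℝ) (hε₀ : 0 ≤ ε₀)
    (hDP : ∀ t < T, ∀ h : ∀ s : Fin t, X s, IsDP (fun S => κ t S h) ε₀ 0)
    (δhat : ℝ) (hδhat : δhat ∈ Set.Ioo (0 : ℝ) 1) :
    IsDP (fun S => composedMeasure X κ S T)
      (ε₀ * Real.sqrt (2 * T * Real.log (1 / δhat)) +
        T * ε₀ * (Real.exp ε₀ - 1))
      δhat := by
  rw [← sqrt_two_mul_sum_const_sq_mul hε₀]
  simpa only [Finset.sum_const, Finset.card_range, nsmul_eq_mul, mul_assoc] using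
    stmt4_general (κ := κ) (fun t S ↦ (hκmeas t).comp measurable_prodMk_left) hκprob hDP
      hδhat.1 hδhat.2.le
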